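/- Let u be an f-harmonic function on the Gaussian space, i.e. a smooth function on ℝ^n satisfying Δu - (1/2)⟨x, ∇u⟩ = 0. If u(x) = O(e^{α|x|²/4}) as |x| → ∞ for some 0 < α < 1, then u is constant. -/

import Mathlib

open MeasureTheory

/-- The Euclidean Laplacian `Δu(x) = ∑ᵢ ∂²u/∂xᵢ²`. -/
noncomputable def eLaplacian (n : ℕ) (u : EuclideanSpace ℝ (Fin n) → ℝ)
    (x : EuclideanSpace ℝ (Fin n)) : ℝ :=
  ∑ i : Fin n,
    fderiv ℝ (fun y => fderiv ℝ u y (EuclideanSpace.single i 1)) x (EuclideanSpace.single i 1)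

lemma aux_second {h h' : ℝ → ℝ} {c : ℝ} (h1 : ∀ᶠ t in nhds (0:ℝ), HasDerivAt h (h' t) t)
    (h2 : HasDerivAt h' c 0) (hm : IsLocalMax h 0) : h' 0 = 0 ∧ c ≤ 0 := by
  have h0 : h' 0 = 0 := hm.hasDerivAt_eq_zero h1.self_of_nhds
  refine ⟨h0, ?_⟩
  by_contra! hc
  have e1 : deriv h =ᶠ[nhds 0] h' := h1.mono fun t ht => ht.deriv
  have e2 : deriv (deriv h) 0 = c := by
    rw [e1.deriv_eq]; exact h2.deriv
  have hmin : IsLocalMin h 0 :=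
    isLocalMin_of_deriv_deriv_pos (by rw [e2]; exact hc) (by rw [e1.self_of_nhds, h0])
      h1.self_of_nhds.continuousAt
  have hconst : h =ᶠ[nhds 0] fun _ => h 0 := by
    filter_upwards [hm, hmin] with t a b
    exact le_antisymm a b
  have e3 : deriv h =ᶠ[nhds 0] fun _ => 0 := by
    have := hconst.deriv
    simpa using this
  have : deriv (deriv h) 0 = 0 := by rw [e3.deriv_eq]; simp
  linarith

lemma aux_barrier (n : ℕ) (α : ℝ) (hα : α ∈ Set.Ioo (0 : ℝ) 1) :
    ∃ g g1 g2 : ℝ → ℝ, (∀ s > 0, HasDerivAt g (g1 s) s ∧ HasDerivAt g1 (g2 s) s ∧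
      4 * s * g2 s + 2 * n * g1 s - s * g1 s < 0) ∧
      ∀ C ε M : ℝ, 0 < ε → ∀ᶠ s in Filter.atTop, C * Real.exp (α * s / 4) - ε * g s ≤ M := by
  obtain ⟨ha0, ha1⟩ := hα
  obtain ⟨β, hβ⟩ : ∃ β, β = (1 + α) / 2 := ⟨_, rfl⟩
  have hb1 : β < 1 := by linarith
  have hab : α < β := by linarith
  obtain ⟨S, hS⟩ : ∃ S : ℝ, S = 2 * n / (1 - β) := ⟨_, rfl⟩
  have hn : (0:ℝ) ≤ n := Nat.cast_nonneg n
  have hS0 : 0 ≤ S := by rw [hS]; apply div_nonneg <;> linarith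
  have hS' : S * (1 - β) = 2 * n := by rw [hS]; field_simp [show (1 - β) ≠ 0 by linarith]
  obtain ⟨A, hA⟩ : ∃ A : ℝ, A = S ^ (n+2) * n * Real.exp (β * S / 4) + 1 := ⟨_, rfl⟩
  have hA1 : 1 ≤ A := by rw [hA]; have : 0 ≤ S ^ (n+2) * n * Real.exp (β * S / 4) := by positivity
                         linarith
  refine ⟨fun s => Real.exp (β * s / 4) - A * (s ^ (n+1))⁻¹,
    fun s => β / 4 * Real.exp (β * s / 4) + A * (n+1) * (s ^ (n+2))⁻¹,
    fun s => β ^ 2 / 16 * Real.exp (β * s / 4) - A * (n+1) * (n+2) * (s ^ (n+3))⁻¹, ?_, ?_⟩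
  · intro s hs
    have hE : HasDerivAt (fun s : ℝ => Real.exp (β * s / 4)) (Real.exp (β * s / 4) * (β / 4)) s := by
      have : HasDerivAt (fun s : ℝ => β * s / 4) (β / 4) s := by
        simpa using ((hasDerivAt_id s).const_mul β).div_const 4
      exact this.exp
    have hP : ∀ k : ℕ, HasDerivAt (fun s : ℝ => (s ^ (k+1))⁻¹) (-((k+1) * (s ^ (k+2))⁻¹)) s := by
      intro k
      have := (hasDerivAt_pow (k+1) s).inv (by positivity)
      refine HasDerivAt.congr_deriv this ?_
      simp only [Nat.add_sub_cancel]
      push_cast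
      field_simp
      ring
    refine ⟨?_, ?_, ?_⟩
    · refine HasDerivAt.congr_deriv (hE.sub ((hP n).const_mul A)) ?_
      ring
    · refine HasDerivAt.congr_deriv ((hE.const_mul (β/4)).add ((hP (n+1)).const_mul (A * (n+1)))) ?_
      push_cast
      ring
    · have key : 4 * s * (β ^ 2 / 16 * Real.exp (β * s / 4) - A * (n+1) * (n+2) * (s ^ (n+3))⁻¹)
          + 2 * n * (β / 4 * Real.exp (β * s / 4) + A * (n+1) * (s ^ (n+2))⁻¹)
          - s * (β / 4 * Real.exp (β * s / 4) + A * (n+1) * (s ^ (n+2))⁻¹)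
          = β / 4 * Real.exp (β * s / 4) * (2 * n - s * (1 - β))
            - A * (n+1) * (s ^ (n+2))⁻¹ * (2 * n + 8 + s) := by
        have : (s ^ (n+3))⁻¹ * s = (s ^ (n+2))⁻¹ := by field_simp; ring
        linear_combination (-4 * A * (n+1) * (n+2)) * this
      show _ < 0
      rw [key]
      have hq : 0 < (s ^ (n+2))⁻¹ := by positivity
      have hb0 : 0 < β := by linarith
      by_cases hsS : S ≤ s
      · have : 2 * n - s * (1 - β) ≤ 0 := by nlinarith
        have t1 : β / 4 * Real.exp (β * s / 4) * (2 * n - s * (1 - β)) ≤ 0 :=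
          mul_nonpos_of_nonneg_of_nonpos (by positivity) this
        have t2 : 0 < A * (n+1) * (s ^ (n+2))⁻¹ * (2 * n + 8 + s) := by positivity
        linarith
      · push Not at hsS
        have hSp : 0 < S := by linarith
        have e1 : Real.exp (β * s / 4) ≤ Real.exp (β * S / 4) := by
          apply Real.exp_le_exp.2; nlinarith
        have t1 : β / 4 * Real.exp (β * s / 4) * (2 * n - s * (1 - β)) ≤
            1 * Real.exp (β * S / 4) * (2 * n) := by
          have : 0 ≤ 2 * n - s * (1 - β) := by nlinarith
          gcongr
          · linarith
          · nlinarith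
        have t3 : (S ^ (n+2))⁻¹ ≤ (s ^ (n+2))⁻¹ := by gcongr
        have t4 : n * Real.exp (β * S / 4) < A * (s ^ (n+2))⁻¹ := by
          have : n * Real.exp (β * S / 4) < A * (S ^ (n+2))⁻¹ := by
            rw [← div_eq_mul_inv, lt_div_iff₀ (by positivity), hA]; linarith
          refine this.trans_le ?_
          gcongr
        have t5 : A * (s ^ (n+2))⁻¹ * 2 ≤ A * (n+1) * (s ^ (n+2))⁻¹ * (2 * n + 8 + s) := by
          have hp : 0 < A * (s ^ (n+2))⁻¹ := by positivity
          have : 2 ≤ ((n:ℝ)+1) * (2 * n + 8 + s) := by nlinarith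
          nlinarith
        linarith
  · intro C ε M hε
    have l1 : Filter.Tendsto (fun s : ℝ => Real.exp (α * s / 4)) Filter.atTop Filter.atTop := by
      apply Real.tendsto_exp_atTop.comp
      exact (Filter.tendsto_id.const_mul_atTop ha0).atTop_div_const (by norm_num)
    have l2 : Filter.Tendsto (fun s : ℝ => Real.exp ((β - α) * s / 4)) Filter.atTop Filter.atTop := by
      apply Real.tendsto_exp_atTop.comp
      exact (Filter.tendsto_id.const_mul_atTop (by linarith)).atTop_div_const (by norm_num)
    filter_upwards [l1.eventually_ge_atTop (ε * A - M), l2.eventually_ge_atTop ((C + 1) / ε),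
      Filter.eventually_ge_atTop 1] with s h1 h2 h3
    have hexp : Real.exp (β * s / 4) = Real.exp (α * s / 4) * Real.exp ((β - α) * s / 4) := by
      rw [← Real.exp_add]; ring_nf
    have hi : (s ^ (n+1))⁻¹ ≤ 1 := inv_le_one_of_one_le₀ (one_le_pow₀ h3)
    rw [div_le_iff₀ hε] at h2
    have hp := Real.exp_pos (α * s / 4)
    have a1 : (C + 1) * Real.exp (α * s / 4) ≤ ε * Real.exp (β * s / 4) := by
      rw [hexp]; nlinarith
    have a2 : ε * (A * (s ^ (n+1))⁻¹) ≤ ε * A := by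
      have : A * (s ^ (n+1))⁻¹ ≤ A := by nlinarith
      gcongr
    linarith

lemma aux_le (n : ℕ) (u : EuclideanSpace ℝ (Fin n) → ℝ) (hsm : ContDiff ℝ (⊤ : ℕ∞) u)
    (hharm : ∀ x, eLaplacian n u x - (1 / 2) * fderiv ℝ u x x = 0)
    (α : ℝ) (hα : α ∈ Set.Ioo (0 : ℝ) 1)
    (hO : ∃ C : ℝ, ∀ᶠ x in Filter.cocompact (EuclideanSpace ℝ (Fin n)),
        |u x| ≤ C * Real.exp (α * ‖x‖ ^ 2 / 4)) (x₁ : EuclideanSpace ℝ (Fin n)) :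
    u x₁ ≤ u 0 := by
  by_contra! hlt
  obtain ⟨C, hC⟩ := hO
  obtain ⟨g, g1, g2, hg, hgrow⟩ := aux_barrier n α hα
  obtain ⟨η, hη⟩ : ∃ η, η = (u x₁ - u 0) / 2 := ⟨_, rfl⟩
  have hη0 : 0 < η := by linarith
  have hx1 : 0 < ‖x₁‖ := by
    rw [norm_pos_iff]; rintro rfl; exact lt_irrefl _ hlt
  have hcont : Continuous u := hsm.continuous
  obtain ⟨δ₀, hδ₀, hδu⟩ := Metric.continuous_iff.1 hcont 0 η hη0
  obtain ⟨δ, hδ⟩ : ∃ δ, δ = min (δ₀ / 2) ‖x₁‖ := ⟨_, rfl⟩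
  have hδ0 : 0 < δ := by rw [hδ]; positivity
  have hδ1 : δ ≤ ‖x₁‖ := by rw [hδ]; exact min_le_right _ _
  have hδ2 : δ < δ₀ := by rw [hδ]; exact (min_le_left _ _).trans_lt (by linarith)
  obtain ⟨ε, hε, hεg⟩ : ∃ ε > 0, ε * (g (‖x₁‖ ^ 2) - g (δ ^ 2)) < η := by
    obtain ⟨K, hK⟩ : ∃ K, K = |g (‖x₁‖ ^ 2) - g (δ ^ 2)| := ⟨_, rfl⟩
    have hK0 : 0 ≤ K := by rw [hK]; positivity
    refine ⟨η / (K + 1), by positivity, ?_⟩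
    calc _ ≤ η / (K + 1) * K := by rw [hK]; gcongr; exact le_abs_self _
      _ < η := by rw [div_mul_eq_mul_div, div_lt_iff₀ (by positivity)]; nlinarith
  have hgc : ∀ x : EuclideanSpace ℝ (Fin n), 0 < ‖x‖ → ContinuousAt (fun x => u x - ε * g (‖x‖ ^ 2)) x := by
    intro x hx
    have h1 : ContinuousAt g (‖x‖ ^ 2) := (hg _ (by positivity)).1.continuousAt
    have h2 : ContinuousAt (fun x : EuclideanSpace ℝ (Fin n) => ‖x‖ ^ 2) x := by fun_prop
    exact hcont.continuousAt.sub
      (continuousAt_const.mul (ContinuousAt.comp (f := fun x : EuclideanSpace ℝ (Fin n) => ‖x‖ ^ 2) h1 h2))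
  have hclosed : IsClosed {x : EuclideanSpace ℝ (Fin n) | δ ≤ ‖x‖} :=
    isClosed_le continuous_const continuous_norm
  obtain ⟨y, hyδ, hymax⟩ := ContinuousOn.exists_isMaxOn' (f := fun x => u x - ε * g (‖x‖ ^ 2))
    (fun x hx => (hgc x (hδ0.trans_le hx)).continuousWithinAt) hclosed
    (x₀ := x₁) hδ1 (by
      have hsq : Filter.Tendsto (fun x : EuclideanSpace ℝ (Fin n) => ‖x‖ ^ 2)
          (Filter.cocompact _) Filter.atTop :=
        (Filter.tendsto_pow_atTop (two_ne_zero)).comp (tendsto_norm_cocompact_atTop)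
      have hev := hsq.eventually (hgrow C ε (u x₁ - ε * g (‖x₁‖ ^ 2)) hε)
      refine Filter.Eventually.filter_mono inf_le_left ?_
      filter_upwards [hC, hev] with x h1 h2
      have := le_abs_self (u x)
      linarith)
  have hyδ' : δ ≤ ‖y‖ := hyδ
  have hm1 := hymax hδ1
  simp only [Set.mem_ofPred_eq] at hm1
  rcases hyδ'.eq_or_lt with heq | hlt'
  · rw [← heq] at hm1
    have := hδu y (by rw [dist_zero_right, ← heq]; exact hδ2)
    rw [Real.dist_eq] at this
    have := le_abs_self (u y - u 0)
    linarith
  · have hloc : IsLocalMax (fun x => u x - ε * g (‖x‖ ^ 2)) y := by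
      apply hymax.isLocalMax
      filter_upwards [(isOpen_lt continuous_const continuous_norm).mem_nhds hlt'] with z hz
      exact le_of_lt hz
    have hy0 : 0 < ‖y‖ := hδ0.trans hlt'
    obtain ⟨s, hs⟩ : ∃ s, s = ‖y‖ ^ 2 := ⟨_, rfl⟩
    have hs0 : 0 < s := by rw [hs]; positivity
    have main : ∀ i : Fin n, fderiv ℝ u y (EuclideanSpace.single i 1) - ε * (g1 s * (2 * y i)) = 0 ∧
        fderiv ℝ (fun y => fderiv ℝ u y (EuclideanSpace.single i 1)) y (EuclideanSpace.single i 1)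
          - ε * (g2 s * (2 * y i) * (2 * y i) + g1 s * 2) ≤ 0 := by
      intro i
      set e : EuclideanSpace ℝ (Fin n) := EuclideanSpace.single i 1 with he
      have hnorm : ∀ t : ℝ, ‖y + t • e‖ ^ 2 = s + 2 * t * y i + t ^ 2 := by
        intro t
        rw [norm_add_sq_real, hs, inner_smul_right, norm_smul, mul_pow]
        have h1 : ‖e‖ = 1 := by simp [he]
        have h2 : inner ℝ y e = y i := by simp [he, EuclideanSpace.inner_single_right]
        rw [h1, h2]; simp; ring
      have hline : ∀ t : ℝ, HasDerivAt (fun t : ℝ => y + t • e) e t := by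
        intro t
        simpa using ((hasDerivAt_id t).smul_const e).const_add y
      have hq : ∀ t : ℝ, HasDerivAt (fun t : ℝ => s + 2 * t * y i + t ^ 2) (2 * y i + 2 * t) t := by
        intro t
        have := ((((hasDerivAt_id t).const_mul 2).mul_const (y i)).const_add s).add (hasDerivAt_pow 2 t)
        refine HasDerivAt.congr_deriv this ?_
        simp
      have hd1 : Differentiable ℝ u := hsm.differentiable (by simp)
      have hd2 : Differentiable ℝ (fun y => fderiv ℝ u y e) := by
        have : ContDiff ℝ 1 (fderiv ℝ u) := hsm.fderiv_right (by norm_cast)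
        exact (this.differentiable (by simp)).clm_apply (differentiable_const e)
      have hpos : ∀ᶠ t in nhds (0:ℝ), 0 < s + 2 * t * y i + t ^ 2 := by
        have : Continuous (fun t : ℝ => s + 2 * t * y i + t ^ 2) := by fun_prop
        exact this.continuousAt.eventually (lt_mem_nhds (by simpa using hs0))
      have := aux_second (h := fun t : ℝ => u (y + t • e) - ε * g (s + 2 * t * y i + t ^ 2))
        (h' := fun t : ℝ => fderiv ℝ u (y + t • e) e
          - ε * (g1 (s + 2 * t * y i + t ^ 2) * (2 * y i + 2 * t)))
        (c := fderiv ℝ (fun y => fderiv ℝ u y e) y e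
          - ε * (g2 s * (2 * y i) * (2 * y i) + g1 s * 2)) ?_ ?_ ?_
      · simpa using this
      · filter_upwards [hpos] with t ht
        refine HasDerivAt.sub ?_ (HasDerivAt.const_mul ε ?_)
        · exact (hd1 _).hasFDerivAt.comp_hasDerivAt t (hline t)
        · exact (hg _ ht).1.comp t (hq t)
      · refine HasDerivAt.sub ?_ (HasDerivAt.const_mul ε ?_)
        · have := (hd2 (y + (0:ℝ) • e)).hasFDerivAt.comp_hasDerivAt 0 (hline 0)
          rw [zero_smul, add_zero] at this
          exact this
        · have h1 : HasDerivAt (fun t : ℝ => g1 (s + 2 * t * y i + t ^ 2)) (g2 s * (2 * y i)) 0 := by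
            have h := (hg (s + 2 * 0 * y i + 0 ^ 2) (by simpa using hs0)).2.1.comp 0 (hq 0)
            simpa [Function.comp_def] using h
          have h2 : HasDerivAt (fun t : ℝ => 2 * y i + 2 * t) 2 0 := by
            simpa using ((hasDerivAt_id (0:ℝ)).const_mul 2).const_add (2 * y i)
          have := h1.mul h2
          refine HasDerivAt.congr_deriv this ?_
          simp
      · have hc : ContinuousAt (fun t : ℝ => y + t • e) 0 := (hline 0).continuousAt
        have hl : ∀ᶠ z in nhds (y + (0:ℝ) • e), u z - ε * g (‖z‖ ^ 2) ≤ u y - ε * g (‖y‖ ^ 2) := by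
          rw [zero_smul, add_zero]; exact hloc
        have := hc.eventually hl
        filter_upwards [this] with t ht
        rw [hnorm t] at ht
        simpa [← hs] using ht
    have hsum : ∑ i, y i ^ 2 = s := by
      rw [hs, EuclideanSpace.norm_sq_eq]; simp
    have hgrad : fderiv ℝ u y y = 2 * ε * s * g1 s := by
      have hy : y = ∑ i, y i • EuclideanSpace.single i (1:ℝ) := by
        have := (EuclideanSpace.basisFun (Fin n) ℝ).sum_repr y
        simpa using this.symm
      have : fderiv ℝ u y y = ∑ i, y i * fderiv ℝ u y (EuclideanSpace.single i 1) := by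
        have h := congrArg (fderiv ℝ u y) hy
        rw [map_sum] at h
        simpa using h
      rw [this, ← hsum, Finset.mul_sum, Finset.sum_mul]
      refine Finset.sum_congr rfl fun i _ => ?_
      have := (main i).1
      rw [hsum]
      linear_combination (y i) * this
    have hlap : eLaplacian n u y ≤ ε * (4 * s * g2 s + 2 * n * g1 s) := by
      have : eLaplacian n u y ≤ ∑ i : Fin n, ε * (g2 s * (2 * y i) * (2 * y i) + g1 s * 2) := by
        apply Finset.sum_le_sum
        intro i _
        linarith [(main i).2]
      refine this.trans (le_of_eq ?_)
      rw [← Finset.mul_sum, Finset.sum_add_distrib]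
      have : ∑ i : Fin n, g2 s * (2 * y i) * (2 * y i) = 4 * s * g2 s := by
        rw [show 4 * s * g2 s = 4 * g2 s * s by ring]
        nth_rw 3 [← hsum]
        rw [Finset.mul_sum]
        exact Finset.sum_congr rfl fun i _ => by ring
      rw [this]
      simp
      ring_nf
      simp
    have h0 := hharm y
    rw [hgrad] at h0
    have := (hg s hs0).2.2
    nlinarith

/-- An `f`-harmonic function on the Gaussian space (`Δu - ½⟨x,∇u⟩ = 0`) with
`u = O(e^{α|x|²/4})` as `x → ∞` for some `0 < α < 1` is constant. -/
theorem stmt_8 (n : ℕ) (u : EuclideanSpace ℝ (Fin n) → ℝ) (hsm : ContDiff ℝ (⊤ : ℕ∞) u)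
    (hharm : ∀ x, eLaplacian n u x - (1 / 2) * fderiv ℝ u x x = 0)
    (α : ℝ) (hα : α ∈ Set.Ioo (0 : ℝ) 1)
    (hO : ∃ C : ℝ, ∀ᶠ x in Filter.cocompact (EuclideanSpace ℝ (Fin n)),
        |u x| ≤ C * Real.exp (α * ‖x‖ ^ 2 / 4)) :
    ∃ c : ℝ, u = fun _ => c := by
  refine ⟨u 0, funext fun x => le_antisymm (aux_le n u hsm hharm α hα hO x) ?_⟩
  have h := aux_le n (fun x => - u x) hsm.neg ?_ α hα ?_ x
  · exact neg_le_neg_iff.1 h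
  · intro z
    have h1 : ∀ z, fderiv ℝ (fun x => - u x) z = - fderiv ℝ u z := fun z => fderiv_fun_neg
    have h2 := hharm z
    have h3 : eLaplacian n (fun x => - u x) z = - eLaplacian n u z := by
      unfold eLaplacian
      rw [← Finset.sum_neg_distrib]
      refine Finset.sum_congr rfl fun i _ => ?_
      simp only [h1, ContinuousLinearMap.neg_apply]
      rw [fderiv_fun_neg]
      rfl
    rw [h3, h1, ContinuousLinearMap.neg_apply]
    linarith
  · simpa using hO
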